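/- For every integer t ≥ 1, define f(t) = C(t, ⌊t/2⌋) · ⌈t/2⌉^⌈t/2⌉ · (⌊t/2⌋+1)^⌊t/2⌋ / (t+1)^t. Then f(t) < 1/√(3t/2 + 1). -/

import Mathlib

theorem centralBinom_sq_mul_le (n : ℕ) :
    n.centralBinom ^ 2 * (3 * n + 1) ≤ (4 ^ n) ^ 2 := by
  induction n with
  | zero => simp
  | succ n ih =>
    have h := Nat.succ_mul_centralBinom_succ n
    refine Nat.le_of_mul_le_mul_left (c := (n + 1) ^ 2) ?_ (by positivity)
    calc (n + 1) ^ 2 * ((n + 1).centralBinom ^ 2 * (3 * (n + 1) + 1))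
        = ((n + 1) * (n + 1).centralBinom) ^ 2 * (3 * n + 4) := by ring
      _ = 4 * n.centralBinom ^ 2 * ((2 * n + 1) ^ 2 * (3 * n + 4)) := by rw [h]; ring
      _ ≤ 4 * n.centralBinom ^ 2 * (4 * (n + 1) ^ 2 * (3 * n + 1)) :=
        Nat.mul_le_mul_left _ (by nlinarith)
      _ = 16 * (n + 1) ^ 2 * (n.centralBinom ^ 2 * (3 * n + 1)) := by ring
      _ ≤ 16 * (n + 1) ^ 2 * (4 ^ n) ^ 2 := Nat.mul_le_mul_left _ ih
      _ = (n + 1) ^ 2 * (4 ^ (n + 1)) ^ 2 := by ring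

theorem centralBinom_div_le (n : ℕ) :
    (n.centralBinom : ℝ) / 4 ^ n ≤ 1 / Real.sqrt (3 * n + 1) := by
  rw [div_le_div_iff₀ (by positivity) (by positivity), one_mul]
  refine le_of_sq_le_sq ?_ (by positivity)
  rw [mul_pow, Real.sq_sqrt (by positivity)]
  exact_mod_cast centralBinom_sq_mul_le n

theorem stmt_2 (t : ℕ) (ht : 1 ≤ t) :
    (Nat.choose t (t / 2) : ℝ) * ((t + 1) / 2 : ℕ) ^ ((t + 1) / 2) *
        (t / 2 + 1 : ℕ) ^ (t / 2) / ((t : ℝ) + 1) ^ t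
      < 1 / Real.sqrt (3 * t / 2 + 1) := by
  obtain ⟨m, rfl | rfl⟩ := Nat.even_or_odd' t
  · have hm : m ≠ 0 := by omega
    have half : 2 * m / 2 = m := by omega
    have half_succ : (2 * m + 1) / 2 = m := by omega
    rw [half, half_succ, ← Nat.centralBinom_eq_two_mul_choose]
    have hrad : (3 * ((2 * m : ℕ) : ℝ) / 2 + 1) = 3 * m + 1 := by push_cast; ring
    rw [hrad]
    refine lt_of_lt_of_le ?_ (centralBinom_div_le m)
    have hcb : (0 : ℝ) < m.centralBinom := by exact_mod_cast m.centralBinom_pos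
    have hpow : ((m : ℝ) * (m + 1) * 4) ^ m < ((2 * m + 1) ^ 2) ^ m :=
      pow_lt_pow_left₀ (by nlinarith) (by positivity) hm
    rw [div_lt_div_iff₀ (by positivity) (by positivity)]
    calc (m.centralBinom : ℝ) * (m : ℝ) ^ m * ((m + 1 : ℕ) : ℝ) ^ m * 4 ^ m
        = m.centralBinom * ((m : ℝ) * (m + 1) * 4) ^ m := by push_cast; simp only [mul_pow]; ring
      _ < m.centralBinom * ((2 * m + 1) ^ 2) ^ m := mul_lt_mul_of_pos_left hpow hcb
      _ = m.centralBinom * (((2 * m : ℕ) : ℝ) + 1) ^ (2 * m) := by push_cast; rw [pow_mul]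
  · have half : (2 * m + 1) / 2 = m := by omega
    have half_succ : (2 * m + 1 + 1) / 2 = m + 1 := by omega
    rw [half, half_succ]
    have hchoose : (m + 1).centralBinom = 2 * (2 * m + 1).choose m := by
      rw [Nat.centralBinom_eq_two_mul_choose, show 2 * (m + 1) = 2 * m + 1 + 1 by ring,
        Nat.choose_succ_succ, Nat.choose_symm_half]
      ring
    have hlhs : ((2 * m + 1).choose m : ℝ) * ((m + 1 : ℕ) : ℝ) ^ (m + 1) *
        ((m + 1 : ℕ) : ℝ) ^ m / (((2 * m + 1 : ℕ) : ℝ) + 1) ^ (2 * m + 1)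
        = ((m + 1).centralBinom : ℝ) / 4 ^ (m + 1) := by
      have hbase : (((2 * m + 1 : ℕ) : ℝ) + 1) = 2 * ((m + 1 : ℕ) : ℝ) := by push_cast; ring
      have hfour : (4 : ℝ) ^ (m + 1) = 2 * 2 ^ (2 * m + 1) := by
        rw [show (4 : ℝ) = 2 ^ 2 by norm_num, ← pow_mul]; ring
      rw [hbase, hchoose, hfour, mul_pow, mul_assoc, ← pow_add,
        show m + 1 + m = 2 * m + 1 by ring, mul_div_mul_right _ _ (by positivity)]
      push_cast
      rw [mul_div_mul_left _ _ two_ne_zero]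
    rw [hlhs]
    refine (centralBinom_div_le (m + 1)).trans_lt ?_
    refine one_div_lt_one_div_of_lt (by positivity) (Real.sqrt_lt_sqrt (by positivity) ?_)
    push_cast
    linarith
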